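/- arXiv:2405.04047 — 9 statements merged into one kernel-verified Lean document; each statement's English description precedes it below -/
import Mathlib

section
/- Under these assumptions, set λ* := c2·min(σ²·c1, (λ − K − L/2)·ℓ0) / (1 − exp(−c1·ℓ0) + c2·ℓ0). Then for every r ≥ 0 one has ψ(r) ≤ −λ*·f(r). -/
/- Key Lyapunov inequality for the asymptotic coupling by reflection:
   ψ(r) ≤ −λ*·f(r) for all r ≥ 0, where
   λ* = c2·min(σ²·c1, (λ − K − L/2)·ℓ0) / (1 − exp(−c1·ℓ0) + c2·ℓ0). -/
theorem stmt_0
    (l0 sigma K L lam : ℝ) (φ : ℝ → ℝ)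
    (hl0 : 0 < l0) (hsigma : sigma ≠ 0) (hK : 0 ≤ K) (hL : 0 ≤ L)
    (hlam : K + L / 2 < lam)
    (hφ0 : φ 0 = 0) (hφmono : MonotoneOn φ (Set.Ici 0))
    (hφcont : ContinuousOn φ (Set.Ici 0))
    (hφnonneg : ∀ r, 0 ≤ r → 0 ≤ φ r)
    (c1 c2 lamStar : ℝ) (f ψ : ℝ → ℝ)
    (hc1 : c1 = (2 * φ l0 + (L + 2 * K) * l0) / sigma ^ 2)
    (hc1pos : 0 < c1)
    (hc2 : c2 = c1 * Real.exp (-c1 * l0))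
    (hf : ∀ r, f r = 1 - Real.exp (-c1 * r) + c2 * r)
    (hψ : ∀ r, ψ r =
      (c1 * Real.exp (-c1 * r) + c2) *
        ((if r ≤ l0 then φ r + lam * r else 0) - (lam - K - L / 2) * r)
      + 2 * sigma ^ 2 * (-(c1 ^ 2) * Real.exp (-c1 * r)))
    (hlamStar : lamStar =
      c2 * min (sigma ^ 2 * c1) ((lam - K - L / 2) * l0) /
        (1 - Real.exp (-c1 * l0) + c2 * l0)) :
    ∀ r, 0 ≤ r → ψ r ≤ -lamStar * f r := by
  intro r hr
  have hs : 0 < sigma ^ 2 := by positivity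
  have hE : 0 < Real.exp (-c1 * l0) := Real.exp_pos _
  have he : 0 < Real.exp (-c1 * r) := Real.exp_pos _
  have hE1 : Real.exp (-c1 * l0) * (1 + c1 * l0) ≤ 1 := by
    have h1 := Real.add_one_le_exp (c1 * l0)
    have h2 : Real.exp (-c1 * l0) * Real.exp (c1 * l0) = 1 := by
      rw [← Real.exp_add]; simp
    nlinarith
  have hEr : Real.exp (-c1 * l0) * (1 - c1 * (r - l0)) ≤ Real.exp (-c1 * r) := by
    have h1 := Real.add_one_le_exp (-c1 * (r - l0))
    have h2 : Real.exp (-c1 * r) = Real.exp (-c1 * l0) * Real.exp (-c1 * (r - l0)) := by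
      rw [← Real.exp_add]; congr 1; ring
    rw [h2]
    apply mul_le_mul_of_nonneg_left _ hE.le
    linarith
  have hle1 : Real.exp (-c1 * r) ≤ 1 := by
    rw [Real.exp_le_one_iff]; nlinarith
  have hmono : r ≤ l0 → Real.exp (-c1 * l0) ≤ Real.exp (-c1 * r) := by
    intro h
    apply Real.exp_le_exp.mpr; nlinarith
  have hc1' : c1 * sigma ^ 2 = 2 * φ l0 + (L + 2 * K) * l0 := by
    rw [hc1]; field_simp
  have hc2pos : 0 < c2 := by rw [hc2]; positivity
  rw [hψ, hf, hlamStar]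
  generalize Real.exp (-c1 * r) = e at *
  generalize Real.exp (-c1 * l0) = E at *
  have hcl : 0 < c1 * l0 := by positivity
  have hD : 0 < 1 - E + c2 * l0 := by
    have : 0 < c2 * l0 := by positivity
    nlinarith
  have hfr : 0 ≤ 1 - e + c2 * r := by
    have : 0 ≤ c2 * r := by positivity
    linarith
  -- reduce to a bound on min times f
  have key : ∀ X m : ℝ, m * (1 - e + c2 * r) ≤ X * (1 - E + c2 * l0) →
      c2 * m / (1 - E + c2 * l0) * (1 - e + c2 * r) ≤ c2 * X := by
    intro X m h
    rw [div_mul_eq_mul_div, div_le_iff₀ hD]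
    have := mul_le_mul_of_nonneg_left h hc2pos.le
    linarith
  by_cases h : r ≤ l0
  · have hEe := hmono h
    rw [if_pos h]
    have hk := key (sigma ^ 2 * c1) (min (sigma ^ 2 * c1) ((lam - K - L / 2) * l0)) (by
      apply mul_le_mul (min_le_left _ _) _ hfr (by positivity)
      have := mul_le_mul_of_nonneg_left h hc2pos.le
      linarith)
    have hφ : φ r ≤ φ l0 := hφmono hr hl0.le h
    have hb : φ r + lam * r - (lam - K - L / 2) * r ≤ c1 * sigma ^ 2 / 2 := by
      have : (K + L / 2) * r ≤ (K + L / 2) * l0 :=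
        mul_le_mul_of_nonneg_left h (by positivity)
      linarith
    have hc2e : c2 ≤ c1 * e := by
      rw [hc2]; exact mul_le_mul_of_nonneg_left hEe hc1pos.le
    have hp : 0 < c1 * e + c2 := by positivity
    have h1 := mul_le_mul_of_nonneg_left hb hp.le
    have hcs : 0 < c1 * sigma ^ 2 := by positivity
    have h2 := mul_le_mul_of_nonneg_left hc2e hcs.le
    linarith
  · push Not at h
    rw [if_neg (not_le.mpr h)]
    have hkap : 0 < lam - K - L / 2 := by linarith
    have hconc : l0 * (1 - e + c2 * r) ≤ r * (1 - E + c2 * l0) := by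
      have h1 := mul_le_mul_of_nonneg_left hEr hl0.le
      have h2 := mul_le_mul_of_nonneg_left hE1 (sub_pos.mpr h).le
      linarith
    have hk := key ((lam - K - L / 2) * r) (min (sigma ^ 2 * c1) ((lam - K - L / 2) * l0)) (by
      have h1 := mul_le_mul_of_nonneg_right
        (min_le_right (sigma ^ 2 * c1) ((lam - K - L / 2) * l0)) hfr
      have h2 := mul_le_mul_of_nonneg_left hconc hkap.le
      linarith)
    have h3 : 0 ≤ c1 * e * ((lam - K - L / 2) * r) := by positivity
    have h4 : 0 ≤ sigma ^ 2 * (c1 ^ 2 * e) := by positivity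
    linarith
end

section
/- For every r ∈ [0, ℓ0] one has ψ(r) ≤ −σ²·c1²·exp(−c1·r) ≤ −σ²·c1·c2, and consequently ψ(r) ≤ −(c1·c2·σ² / (1 − exp(−c1·ℓ0) + c2·ℓ0))·f(r). -/
/- Short-range estimate: for r ∈ [0, ℓ0],
   ψ(r) ≤ −σ²·c1²·exp(−c1·r) ≤ −σ²·c1·c2, and consequently
   ψ(r) ≤ −(c1·c2·σ² / (1 − exp(−c1·ℓ0) + c2·ℓ0))·f(r). -/
theorem stmt_1
    (l0 sigma K L lam : ℝ) (φ : ℝ → ℝ)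
    (hl0 : 0 < l0) (hsigma : sigma ≠ 0) (hK : 0 ≤ K) (hL : 0 ≤ L)
    (hlam : K + L / 2 < lam)
    (hφ0 : φ 0 = 0) (hφmono : MonotoneOn φ (Set.Ici 0))
    (hφcont : ContinuousOn φ (Set.Ici 0))
    (hφnonneg : ∀ r, 0 ≤ r → 0 ≤ φ r)
    (c1 c2 : ℝ) (f ψ : ℝ → ℝ)
    (hc1 : c1 = (2 * φ l0 + (L + 2 * K) * l0) / sigma ^ 2)
    (hc1pos : 0 < c1)
    (hc2 : c2 = c1 * Real.exp (-c1 * l0))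
    (hf : ∀ r, f r = 1 - Real.exp (-c1 * r) + c2 * r)
    (hψ : ∀ r, ψ r =
      (c1 * Real.exp (-c1 * r) + c2) *
        ((if r ≤ l0 then φ r + lam * r else 0) - (lam - K - L / 2) * r)
      + 2 * sigma ^ 2 * (-(c1 ^ 2) * Real.exp (-c1 * r))) :
    ∀ r, 0 ≤ r → r ≤ l0 →
      ψ r ≤ -(sigma ^ 2) * c1 ^ 2 * Real.exp (-c1 * r) ∧
      -(sigma ^ 2) * c1 ^ 2 * Real.exp (-c1 * r) ≤ -(sigma ^ 2) * c1 * c2 ∧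
      ψ r ≤ -(c1 * c2 * sigma ^ 2 / (1 - Real.exp (-c1 * l0) + c2 * l0)) * f r := by
  intro r hr hrl
  have hs : 0 < sigma ^ 2 := by positivity
  have hB : 2 * φ l0 + (L + 2 * K) * l0 = c1 * sigma ^ 2 := by
    rw [hc1]; field_simp
  have hE : Real.exp (-c1 * l0) ≤ Real.exp (-c1 * r) := by
    apply Real.exp_le_exp.mpr
    have := mul_le_mul_of_nonneg_left hrl hc1pos.le
    linarith
  have hEpos : 0 < Real.exp (-c1 * l0) := Real.exp_pos _
  have hE1 : Real.exp (-c1 * l0) < 1 := by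
    rw [← Real.exp_zero]; apply Real.exp_lt_exp.mpr
    nlinarith
  have hφr : φ r ≤ φ l0 := hφmono hr hl0.le hrl
  have hφr0 := hφnonneg r hr
  have hc2pos : 0 < c2 := by rw [hc2]; positivity
  have hc2le : c2 ≤ c1 * Real.exp (-c1 * r) := by
    rw [hc2]; exact mul_le_mul_of_nonneg_left hE hc1pos.le
  have h1 : ψ r ≤ -(sigma ^ 2) * c1 ^ 2 * Real.exp (-c1 * r) := by
    rw [hψ r, if_pos hrl]
    have hb : φ r + lam * r - (lam - K - L / 2) * r ≤ c1 * sigma ^ 2 / 2 := by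
      have : (L + 2 * K) * r ≤ (L + 2 * K) * l0 :=
        mul_le_mul_of_nonneg_left hrl (by positivity)
      linarith
    have hp : (c1 * Real.exp (-c1 * r) + c2) * (φ r + lam * r - (lam - K - L / 2) * r)
        ≤ (2 * (c1 * Real.exp (-c1 * r))) * (c1 * sigma ^ 2 / 2) := by
      apply mul_le_mul (by linarith) hb
      · have : 0 ≤ (K + L / 2) * r := by positivity
        linarith
      · positivity
    linarith
  have h2 : -(sigma ^ 2) * c1 ^ 2 * Real.exp (-c1 * r) ≤ -(sigma ^ 2) * c1 * c2 := by
    have := mul_le_mul_of_nonneg_left hc2le (mul_pos hs hc1pos).le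
    linarith
  refine ⟨h1, h2, (h1.trans h2).trans ?_⟩
  have hF : 0 < 1 - Real.exp (-c1 * l0) + c2 * l0 := by
    have : 0 < c2 * l0 := by positivity
    linarith
  have hfr : f r ≤ 1 - Real.exp (-c1 * l0) + c2 * l0 := by
    rw [hf r]
    have := mul_le_mul_of_nonneg_left hrl hc2pos.le
    linarith
  have h3 : c1 * c2 * sigma ^ 2 / (1 - Real.exp (-c1 * l0) + c2 * l0) * f r
      ≤ c1 * c2 * sigma ^ 2 := by
    rw [div_mul_eq_mul_div, div_le_iff₀ hF]
    exact mul_le_mul_of_nonneg_left hfr (by positivity)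
  linarith
end

section
/- For every r > ℓ0 one has ψ(r) ≤ −c2·(λ − K − L/2)·r, and consequently ψ(r) ≤ −(c2·(λ − K − L/2)·ℓ0 / (1 − exp(−c1·ℓ0) + c2·ℓ0))·f(r). -/
/- Long-range estimate: for r > ℓ0, ψ(r) ≤ −c2·(λ − K − L/2)·r, and consequently
   ψ(r) ≤ −(c2·(λ − K − L/2)·ℓ0 / (1 − exp(−c1·ℓ0) + c2·ℓ0))·f(r). -/
theorem stmt_2
    (l0 sigma K L lam : ℝ) (φ : ℝ → ℝ)
    (hl0 : 0 < l0) (hsigma : sigma ≠ 0) (hK : 0 ≤ K) (hL : 0 ≤ L)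
    (hlam : K + L / 2 < lam)
    (hφ0 : φ 0 = 0) (hφmono : MonotoneOn φ (Set.Ici 0))
    (hφcont : ContinuousOn φ (Set.Ici 0))
    (hφnonneg : ∀ r, 0 ≤ r → 0 ≤ φ r)
    (c1 c2 : ℝ) (f ψ : ℝ → ℝ)
    (hc1 : c1 = (2 * φ l0 + (L + 2 * K) * l0) / sigma ^ 2)
    (hc1pos : 0 < c1)
    (hc2 : c2 = c1 * Real.exp (-c1 * l0))
    (hf : ∀ r, f r = 1 - Real.exp (-c1 * r) + c2 * r)
    (hψ : ∀ r, ψ r =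
      (c1 * Real.exp (-c1 * r) + c2) *
        ((if r ≤ l0 then φ r + lam * r else 0) - (lam - K - L / 2) * r)
      + 2 * sigma ^ 2 * (-(c1 ^ 2) * Real.exp (-c1 * r))) :
    ∀ r, l0 < r →
      ψ r ≤ -c2 * (lam - K - L / 2) * r ∧
      ψ r ≤ -(c2 * (lam - K - L / 2) * l0 /
        (1 - Real.exp (-c1 * l0) + c2 * l0)) * f r := by
  intro r hr
  have hr0 : 0 < r := hl0.trans hr
  have hm : 0 < lam - K - L / 2 := by linarith
  generalize lam - K - L / 2 = m at hψ hm ⊢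
  have hc2pos : 0 < c2 := by rw [hc2]; positivity
  have h1 : ψ r ≤ -c2 * m * r := by
    rw [hψ, if_neg (not_le.mpr hr)]
    have a : 0 ≤ c1 * Real.exp (-c1 * r) * (m * r) := by positivity
    have b : 0 ≤ 2 * sigma ^ 2 * (c1 ^ 2 * Real.exp (-c1 * r)) := by positivity
    linarith
  refine ⟨h1, h1.trans ?_⟩
  have he : Real.exp (-c1 * l0) < 1 := by
    rw [Real.exp_lt_one_iff]
    nlinarith [mul_pos hc1pos hl0]
  have hD : 0 < 1 - Real.exp (-c1 * l0) + c2 * l0 := by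
    have := mul_pos hc2pos hl0
    linarith
  have hconv : r * Real.exp (-c1 * l0) ≤ l0 * Real.exp (-c1 * r) + (r - l0) := by
    have h := convexOn_exp.2 (Set.mem_univ (-c1 * r)) (Set.mem_univ 0)
      (show 0 ≤ l0 / r by positivity)
      (show 0 ≤ (r - l0) / r from div_nonneg (by linarith) hr0.le)
      (by field_simp; ring)
    have e : (l0 / r) • (-c1 * r) + ((r - l0) / r) • (0 : ℝ) = -c1 * l0 := by
      simp only [smul_eq_mul]; field_simp; ring
    rw [e] at h
    simp only [smul_eq_mul, Real.exp_zero, mul_one] at h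
    have h2 := mul_le_mul_of_nonneg_left h hr0.le
    have e2 : r * (l0 / r * Real.exp (-c1 * r) + (r - l0) / r)
        = l0 * Real.exp (-c1 * r) + (r - l0) := by
      field_simp
    rwa [e2] at h2
  have key : l0 * f r ≤ r * (1 - Real.exp (-c1 * l0) + c2 * l0) := by
    rw [hf]
    linarith
  have h3 : c2 * m * l0 / (1 - Real.exp (-c1 * l0) + c2 * l0) * f r ≤ c2 * m * r := by
    rw [div_mul_eq_mul_div, div_le_iff₀ hD]
    have := mul_le_mul_of_nonneg_left key (mul_pos hc2pos hm).le
    linarith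
  linarith
end

section
/- Let λ* := c2·min(σ²·c1, (λ − K − L/2)·ℓ0) / (1 − exp(−c1·ℓ0) + c2·ℓ0). Let ε > 0 and let h : [0,∞) → [0,1] be any function with h(r) = 1 for all r ≥ 2ε. Then for every r ≥ 0, (λ*·f(r) + f′(r)·((φ(r) + λ·r)·𝟙_{r ≤ ℓ0} − (λ − K − L/2)·r))·(1 − h(r)²) ≤ 2·(c1 + c2)·(2·(λ* + K + L/2)·ε + φ(2ε)). -/
/- Cut-off error bound: with λ* as in the Lyapunov inequality, ε > 0 and
   h : [0,∞) → [0,1] with h(r) = 1 for r ≥ 2ε, for every r ≥ 0,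
   (λ*·f(r) + f′(r)·((φ(r) + λ·r)·𝟙_{r ≤ ℓ0} − (λ − K − L/2)·r))·(1 − h(r)²)
     ≤ 2·(c1 + c2)·(2·(λ* + K + L/2)·ε + φ(2ε)). -/
theorem stmt_4
    (l0 sigma K L lam : ℝ) (φ : ℝ → ℝ)
    (hl0 : 0 < l0) (hsigma : sigma ≠ 0) (hK : 0 ≤ K) (hL : 0 ≤ L)
    (hlam : K + L / 2 < lam)
    (hφ0 : φ 0 = 0) (hφmono : MonotoneOn φ (Set.Ici 0))
    (hφcont : ContinuousOn φ (Set.Ici 0))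
    (hφnonneg : ∀ r, 0 ≤ r → 0 ≤ φ r)
    (c1 c2 lamStar : ℝ) (f : ℝ → ℝ)
    (hc1 : c1 = (2 * φ l0 + (L + 2 * K) * l0) / sigma ^ 2)
    (hc1pos : 0 < c1)
    (hc2 : c2 = c1 * Real.exp (-c1 * l0))
    (hf : ∀ r, f r = 1 - Real.exp (-c1 * r) + c2 * r)
    (hlamStar : lamStar =
      c2 * min (sigma ^ 2 * c1) ((lam - K - L / 2) * l0) /
        (1 - Real.exp (-c1 * l0) + c2 * l0))
    (ε : ℝ) (hε : 0 < ε) (h : ℝ → ℝ)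
    (hh0 : ∀ r, 0 ≤ r → 0 ≤ h r) (hh1 : ∀ r, 0 ≤ r → h r ≤ 1)
    (hhcut : ∀ r, 2 * ε ≤ r → h r = 1) :
    ∀ r, 0 ≤ r →
      (lamStar * f r + (c1 * Real.exp (-c1 * r) + c2) *
          ((if r ≤ l0 then φ r + lam * r else 0) - (lam - K - L / 2) * r)) *
        (1 - (h r) ^ 2)
      ≤ 2 * (c1 + c2) * (2 * (lamStar + K + L / 2) * ε + φ (2 * ε)) := by
  intro r hr
  have hc2pos : 0 < c2 := by rw [hc2]; positivity
  have hE0 : Real.exp (-c1 * l0) ≤ 1 := by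
    apply Real.exp_le_one_iff.mpr
    nlinarith [mul_pos hc1pos hl0]
  have hls : 0 ≤ lamStar := by
    rw [hlamStar]
    apply div_nonneg
    · apply mul_nonneg hc2pos.le
      apply le_min
      · positivity
      · apply mul_nonneg _ hl0.le
        linarith
    · have := mul_pos hc2pos hl0
      linarith
  have hφε : 0 ≤ φ (2 * ε) := hφnonneg _ (by linarith)
  have hM : 0 ≤ lamStar + K + L / 2 := by linarith
  have hY : 0 ≤ (c1 + c2) * (2 * (lamStar + K + L / 2) * ε + φ (2 * ε)) := by positivity
  rcases le_or_gt (2 * ε) r with hrε | hrε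
  · rw [hhcut r hrε]
    linarith
  · have hφr : φ r ≤ φ (2 * ε) :=
      hφmono (Set.mem_Ici.mpr hr) (Set.mem_Ici.mpr (by linarith)) hrε.le
    have hφr0 := hφnonneg r hr
    have hfr : f r ≤ (c1 + c2) * r := by
      rw [hf]
      nlinarith [Real.add_one_le_exp (-c1 * r)]
    have hEr : Real.exp (-c1 * r) ≤ 1 := by
      apply Real.exp_le_one_iff.mpr
      nlinarith [mul_nonneg hc1pos.le hr]
    have hB : (if r ≤ l0 then φ r + lam * r else 0) - (lam - K - L / 2) * r
        ≤ φ r + (K + L / 2) * r := by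
      split_ifs
      · linarith
      · nlinarith [mul_nonneg (by linarith : (0:ℝ) ≤ lam) hr]
    have hB0 : 0 ≤ φ r + (K + L / 2) * r := by positivity
    have hD0 : 0 ≤ c1 * Real.exp (-c1 * r) + c2 := by positivity
    have hD : c1 * Real.exp (-c1 * r) + c2 ≤ c1 + c2 := by nlinarith
    have h1 := mul_le_mul_of_nonneg_left hB hD0
    have h2 := mul_le_mul_of_nonneg_right hD hB0
    have h3 := mul_le_mul_of_nonneg_left hfr hls
    have h4 : (c1 + c2) * ((lamStar + K + L / 2) * r + φ r)
        ≤ (c1 + c2) * (2 * (lamStar + K + L / 2) * ε + φ (2 * ε)) := by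
      apply mul_le_mul_of_nonneg_left _ (by linarith)
      nlinarith [mul_le_mul_of_nonneg_left hrε.le hM]
    have hX : lamStar * f r + (c1 * Real.exp (-c1 * r) + c2) *
          ((if r ≤ l0 then φ r + lam * r else 0) - (lam - K - L / 2) * r)
        ≤ (c1 + c2) * (2 * (lamStar + K + L / 2) * ε + φ (2 * ε)) := by
      refine le_trans (add_le_add h3 (h1.trans h2)) (le_trans (le_of_eq ?_) h4)
      ring
    have ht0 : 0 ≤ 1 - (h r) ^ 2 := by nlinarith [hh0 r hr, hh1 r hr]
    have ht1 : 1 - (h r) ^ 2 ≤ 1 := by nlinarith [sq_nonneg (h r)]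
    have h5 := mul_le_mul_of_nonneg_right hX ht0
    have h6 := mul_le_mul_of_nonneg_left ht1 hY
    rw [mul_one] at h6
    have h7 := h5.trans h6
    clear h5 h6
    refine h7.trans ?_
    rw [mul_assoc 2 (c1 + c2)]
    exact le_mul_of_one_le_left hY one_le_two
end

section
/- Assume b1 satisfies condition (B1) with rate φ and constants ℓ0 ≥ 0, λ > 0, and b0 satisfies condition (B2) with constant K ≥ 0. Then for every x ∈ ℝ^d and every Borel probability measure μ on ℝ^d with finite first moment, ⟨x, b(x, μ)⟩ ≤ ℓ0·φ(ℓ0) + λ·ℓ0² − (λ − K)·|x|² + |x|·(|b0(0)| + |b1(0)| + K·∫_{ℝ^d} |y| μ(dy)). -/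
open MeasureTheory
open scoped RealInnerProductSpace

/- Drift dissipativity estimate (R*): under conditions (B1) and (B2), for all x and
   all probability measures μ with finite first moment,
   ⟨x, b(x,μ)⟩ ≤ ℓ0·φ(ℓ0) + λ·ℓ0² − (λ − K)·|x|² + |x|·(|b0(0)| + |b1(0)| + K·μ(|·|)). -/
theorem stmt_5 (d : ℕ) (hd : 1 ≤ d)
    (b1 b0 : EuclideanSpace ℝ (Fin d) → EuclideanSpace ℝ (Fin d))
    (hb1m : Measurable b1) (hb0m : Measurable b0)
    (φ : ℝ → ℝ) (l0 lam K : ℝ)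
    (hl0 : 0 ≤ l0) (hlam : 0 < lam) (hK : 0 ≤ K)
    (hφ0 : φ 0 = 0) (hφmono : MonotoneOn φ (Set.Ici 0))
    (hφnonneg : ∀ r, 0 ≤ r → 0 ≤ φ r)
    (hB1 : ∀ x y : EuclideanSpace ℝ (Fin d),
      ⟪x - y, b1 x - b1 y⟫ ≤
        (if ‖x - y‖ ≤ l0 then ‖x - y‖ * φ ‖x - y‖ else -(lam * ‖x - y‖ ^ 2)))
    (hB2 : ∀ x y : EuclideanSpace ℝ (Fin d), ‖b0 x - b0 y‖ ≤ K * ‖x - y‖)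
    (x : EuclideanSpace ℝ (Fin d)) (μ : Measure (EuclideanSpace ℝ (Fin d)))
    [IsProbabilityMeasure μ] (hμ1 : Integrable (fun y => ‖y‖) μ) :
    ⟪x, b1 x + ∫ y, b0 (x - y) ∂μ⟫ ≤
      l0 * φ l0 + lam * l0 ^ 2 - (lam - K) * ‖x‖ ^ 2
        + ‖x‖ * (‖b0 0‖ + ‖b1 0‖ + K * ∫ y, ‖y‖ ∂μ) := by
  have hI : ‖∫ y, b0 (x - y) ∂μ‖ ≤ ‖b0 0‖ + K * ‖x‖ + K * ∫ y, ‖y‖ ∂μ := by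
    have h := norm_integral_le_of_norm_le (μ := μ) (f := fun y => b0 (x - y))
      (g := fun y => (‖b0 0‖ + K * ‖x‖) + K * ‖y‖)
      ((integrable_const _).add (hμ1.const_mul K))
      (Filter.Eventually.of_forall fun y => by
        have h1 := hB2 (x - y) 0
        have h2 : ‖b0 (x - y)‖ ≤ ‖b0 (x - y) - b0 0‖ + ‖b0 0‖ := by
          simpa using norm_add_le (b0 (x - y) - b0 0) (b0 0)
        have h3 := mul_le_mul_of_nonneg_left (norm_sub_le x y) hK
        rw [sub_zero] at h1
        linarith)
    rw [integral_add (integrable_const _) (hμ1.const_mul K), integral_const_mul] at h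
    simpa using h
  have hA : ⟪x, b1 x - b1 0⟫ ≤ l0 * φ l0 + lam * l0 ^ 2 - lam * ‖x‖ ^ 2 := by
    have h := hB1 x 0
    rw [sub_zero] at h
    have hn := norm_nonneg x
    split_ifs at h with hc
    · have h1 : ‖x‖ * φ ‖x‖ ≤ l0 * φ l0 :=
        mul_le_mul hc (hφmono hn hl0 hc) (hφnonneg _ hn) hl0
      have h2 : lam * ‖x‖ ^ 2 ≤ lam * l0 ^ 2 := by gcongr
      linarith
    · have h1 := mul_nonneg hl0 (hφnonneg l0 hl0)
      have h2 : 0 ≤ lam * l0 ^ 2 := by positivity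
      linarith
  have e : ⟪x, b1 x + ∫ y, b0 (x - y) ∂μ⟫
      = ⟪x, b1 x - b1 0⟫ + ⟪x, b1 0⟫ + ⟪x, ∫ y, b0 (x - y) ∂μ⟫ := by
    rw [inner_add_right, inner_sub_right]; ring
  have h1 := real_inner_le_norm x (b1 0)
  have h2 := real_inner_le_norm x (∫ y, b0 (x - y) ∂μ)
  have h3 := mul_le_mul_of_nonneg_left hI (norm_nonneg x)
  rw [e]
  nlinarith
end

section
/- Assume b1 satisfies condition (B1) with rate φ and constants ℓ0 ≥ 0, λ > 0, b0 satisfies condition (B2) with constant K ≥ 0, and λ > 2K. Then there exists a constant C0 > 0 such that for every x ∈ ℝ^d and every Borel probability measure μ on ℝ^d with finite second moment, ⟨x, b(x, μ)⟩ ≤ C0 − (1/4)·(3λ − 4K)·|x|² + (1/2)·K·∫_{ℝ^d} |y|² μ(dy). -/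
open MeasureTheory
open scoped RealInnerProductSpace

/- Quantified drift dissipativity (T10): under (B1), (B2) and λ > 2K, there is C0 > 0
   with ⟨x, b(x,μ)⟩ ≤ C0 − (1/4)(3λ − 4K)|x|² + (1/2)K·μ(|·|²) for all x and all
   probability measures μ with finite second moment. -/
theorem stmt_6 (d : ℕ) (hd : 1 ≤ d)
    (b1 b0 : EuclideanSpace ℝ (Fin d) → EuclideanSpace ℝ (Fin d))
    (hb1m : Measurable b1) (hb0m : Measurable b0)
    (φ : ℝ → ℝ) (l0 lam K : ℝ)
    (hl0 : 0 ≤ l0) (hlam : 0 < lam) (hK : 0 ≤ K) (hlamK : 2 * K < lam)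
    (hφ0 : φ 0 = 0) (hφmono : MonotoneOn φ (Set.Ici 0))
    (hφnonneg : ∀ r, 0 ≤ r → 0 ≤ φ r)
    (hB1 : ∀ x y : EuclideanSpace ℝ (Fin d),
      ⟪x - y, b1 x - b1 y⟫ ≤
        (if ‖x - y‖ ≤ l0 then ‖x - y‖ * φ ‖x - y‖ else -(lam * ‖x - y‖ ^ 2)))
    (hB2 : ∀ x y : EuclideanSpace ℝ (Fin d), ‖b0 x - b0 y‖ ≤ K * ‖x - y‖) :
    ∃ C0 : ℝ, 0 < C0 ∧
      ∀ (x : EuclideanSpace ℝ (Fin d)) (μ : Measure (EuclideanSpace ℝ (Fin d))),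
        IsProbabilityMeasure μ → Integrable (fun y => ‖y‖ ^ 2) μ →
        ⟪x, b1 x + ∫ y, b0 (x - y) ∂μ⟫ ≤
          C0 - (1 / 4) * (3 * lam - 4 * K) * ‖x‖ ^ 2
            + (1 / 2) * K * ∫ y, ‖y‖ ^ 2 ∂μ := by
  have hε : 0 < lam - 2 * K := by linarith
  have hφl := hφnonneg l0 hl0
  set A := ‖b1 0‖ + ‖b0 0‖ with hA
  refine ⟨l0 * φ l0 + lam * l0 ^ 2 + A ^ 2 / (lam - 2 * K) + 1, by positivity, ?_⟩
  intro x μ hμ hint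
  have hm : Integrable (fun y : EuclideanSpace ℝ (Fin d) => ‖y‖) μ := by
    refine Integrable.mono' ((integrable_const (1 : ℝ)).add hint)
      continuous_norm.aestronglyMeasurable (Filter.Eventually.of_forall fun y => ?_)
    simp only [norm_norm, Pi.add_apply]
    nlinarith [sq_nonneg (‖y‖ - 1), norm_nonneg y]
  have hx := norm_nonneg x
  -- the confining part
  have h1 : ⟪x, b1 x⟫ ≤ ‖x‖ * ‖b1 0‖ + l0 * φ l0 + lam * l0 ^ 2 - lam * ‖x‖ ^ 2 := by
    have h := hB1 x 0
    simp only [sub_zero] at h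
    rw [inner_sub_right] at h
    have h' := real_inner_le_norm x (b1 0)
    split_ifs at h with hc
    · have hφx : φ ‖x‖ ≤ φ l0 := hφmono hx hl0 hc
      have e1 : ‖x‖ * φ ‖x‖ ≤ l0 * φ l0 := mul_le_mul hc hφx (hφnonneg _ hx) hl0
      have e2 : lam * ‖x‖ ^ 2 ≤ lam * l0 ^ 2 := by gcongr
      linarith
    · have : 0 ≤ l0 * φ l0 := by positivity
      have : 0 ≤ lam * l0 ^ 2 := by positivity
      linarith
  -- the interaction part
  have h2 : ‖∫ y, b0 (x - y) ∂μ‖ ≤ ‖b0 0‖ + K * ‖x‖ + K * ∫ y, ‖y‖ ∂μ := by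
    have hg : Integrable (fun y : EuclideanSpace ℝ (Fin d) =>
        (‖b0 0‖ + K * ‖x‖) + K * ‖y‖) μ := (integrable_const _).add (hm.const_mul K)
    refine (norm_integral_le_of_norm_le hg (Filter.Eventually.of_forall fun y => ?_)).trans
      (le_of_eq ?_)
    · have e := hB2 (x - y) 0
      rw [sub_zero] at e
      have e1 := norm_le_norm_add_norm_sub' (b0 (x - y)) (b0 0)
      have e2 : K * ‖x - y‖ ≤ K * (‖x‖ + ‖y‖) := by gcongr; exact norm_sub_le x y
      linarith
    · rw [integral_add (integrable_const _) (hm.const_mul K), integral_const_mul]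
      simp
  have h3 : ‖x‖ * ∫ y, ‖y‖ ∂μ ≤ (1 / 2) * ‖x‖ ^ 2 + (1 / 2) * ∫ y, ‖y‖ ^ 2 ∂μ := by
    have e : ∫ y, ‖x‖ * ‖y‖ ∂μ ≤ ∫ y, ((1 / 2) * ‖x‖ ^ 2 + (1 / 2) * ‖y‖ ^ 2) ∂μ := by
      refine integral_mono (hm.const_mul _)
        ((integrable_const _).add (hint.const_mul _)) fun y => ?_
      show ‖x‖ * ‖y‖ ≤ (1 / 2) * ‖x‖ ^ 2 + (1 / 2) * ‖y‖ ^ 2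
      nlinarith [sq_nonneg (‖x‖ - ‖y‖)]
    rw [integral_const_mul, integral_add (integrable_const _) (hint.const_mul _),
      integral_const_mul] at e
    simpa [integral_const_mul] using e
  have h4 : ‖x‖ * A ≤ (lam - 2 * K) / 4 * ‖x‖ ^ 2 + A ^ 2 / (lam - 2 * K) := by
    have e : (lam - 2 * K) / 4 * ‖x‖ ^ 2 + A ^ 2 / (lam - 2 * K) - ‖x‖ * A
        = ((lam - 2 * K) * ‖x‖ / 2 - A) ^ 2 / (lam - 2 * K) := by
      field_simp
      ring
    have : 0 ≤ ((lam - 2 * K) * ‖x‖ / 2 - A) ^ 2 / (lam - 2 * K) := by positivity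
    linarith
  have h5 := (real_inner_le_norm x (∫ y, b0 (x - y) ∂μ)).trans
    (mul_le_mul_of_nonneg_left h2 hx)
  have h6 := mul_le_mul_of_nonneg_left h3 hK
  rw [inner_add_right]
  rw [hA] at h4 ⊢
  nlinarith
end

section
/- Assume b1 satisfies condition (B1) with rate φ(r) = λ0·r for some λ0 > 0 and constants ℓ0 ≥ 0, λ > 0 with λ > 2K, and b0 satisfies condition (B2) with constant K ≥ 0; let σ ∈ ℝ. Then there exists a constant C0 > 0 such that for every δ > 0, all x, Δ, y ∈ ℝ^d, and every Borel probability measure μ on ℝ^d with finite second moment satisfying the implicit backward Euler relation y = x + δ·b(y, μ) + σ·Δ, one has (1 + (3λ − 4K)·δ/2)·|y|² ≤ |x|² + K·δ·∫_{ℝ^d} |z|² μ(dz) + 2·C0·δ + σ²·|Δ|² + 2σ·⟨Δ, x⟩. -/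
open MeasureTheory
open scoped RealInnerProductSpace

/- Per-step Lyapunov contraction for the backward Euler–Maruyama scheme (HB3):
   there is C0 > 0 such that whenever y = x + δ·b(y, μ) + σ·Δ,
   (1 + (3λ − 4K)δ/2)|y|² ≤ |x|² + Kδ·μ(|·|²) + 2C0δ + σ²|Δ|² + 2σ⟨Δ, x⟩. -/
theorem stmt_9 (d : ℕ) (hd : 1 ≤ d)
    (b1 b0 : EuclideanSpace ℝ (Fin d) → EuclideanSpace ℝ (Fin d))
    (hb1m : Measurable b1) (hb0m : Measurable b0)
    (lam0 l0 lam K sigma : ℝ)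
    (hlam0 : 0 < lam0) (hl0 : 0 ≤ l0) (hlam : 0 < lam) (hK : 0 ≤ K)
    (hlamK : 2 * K < lam)
    (hB1 : ∀ x y : EuclideanSpace ℝ (Fin d),
      ⟪x - y, b1 x - b1 y⟫ ≤
        (if ‖x - y‖ ≤ l0 then lam0 * ‖x - y‖ ^ 2 else -(lam * ‖x - y‖ ^ 2)))
    (hB2 : ∀ x y : EuclideanSpace ℝ (Fin d), ‖b0 x - b0 y‖ ≤ K * ‖x - y‖) :
    ∃ C0 : ℝ, 0 < C0 ∧
      ∀ δ : ℝ, 0 < δ →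
      ∀ (x Δ y : EuclideanSpace ℝ (Fin d))
        (μ : Measure (EuclideanSpace ℝ (Fin d))),
        IsProbabilityMeasure μ → Integrable (fun z => ‖z‖ ^ 2) μ →
        y = x + δ • (b1 y + ∫ z, b0 (y - z) ∂μ) + sigma • Δ →
        (1 + (3 * lam - 4 * K) * δ / 2) * ‖y‖ ^ 2 ≤
          ‖x‖ ^ 2 + K * δ * (∫ z, ‖z‖ ^ 2 ∂μ) + 2 * C0 * δ
            + sigma ^ 2 * ‖Δ‖ ^ 2 + 2 * sigma * ⟪Δ, x⟫ := by
  have hc : 0 < lam / 2 - K := by linarith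
  set B : ℝ := ‖b1 0‖ + ‖b0 0‖ with hB
  refine ⟨B ^ 2 / (lam / 2 - K) / 2 + (lam + lam0) * l0 ^ 2 + 1, by positivity, ?_⟩
  intro δ hδ x Δ y μ hμ hint hy
  set J := ∫ z, b0 (y - z) ∂μ with hJ
  have h1 : ⟪y, b1 y⟫ ≤ -(lam * ‖y‖ ^ 2) + (lam + lam0) * l0 ^ 2 + ‖y‖ * ‖b1 0‖ := by
    have h := hB1 y 0
    rw [sub_zero, inner_sub_right] at h
    have h' := real_inner_le_norm y (b1 0)
    split_ifs at h with hl
    · have : ‖y‖ ^ 2 ≤ l0 ^ 2 := by gcongr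
      nlinarith
    · have : 0 ≤ (lam + lam0) * l0 ^ 2 := by positivity
      linarith
  have h2 : ⟪y, J⟫ ≤ ‖y‖ * ‖b0 0‖ + 3 * K / 2 * ‖y‖ ^ 2 + K / 2 * ∫ z, ‖z‖ ^ 2 ∂μ := by
    refine (real_inner_le_norm y J).trans ?_
    have e : ‖y‖ * ‖J‖ = ‖∫ z, ‖y‖ • b0 (y - z) ∂μ‖ := by
      rw [integral_smul, norm_smul, norm_norm]
    rw [e]
    have hi : Integrable (fun z => K / 2 * ‖z‖ ^ 2) μ := hint.const_mul _
    have hle : ‖∫ z, ‖y‖ • b0 (y - z) ∂μ‖ ≤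
        ∫ z, ((‖y‖ * ‖b0 0‖ + 3 * K / 2 * ‖y‖ ^ 2) + K / 2 * ‖z‖ ^ 2) ∂μ := by
      refine norm_integral_le_of_norm_le ((integrable_const _).add hi) ?_
      refine Filter.Eventually.of_forall fun z => ?_
      rw [norm_smul, norm_norm]
      have a1 := hB2 (y - z) 0
      rw [sub_zero] at a1
      have a2 := norm_sub_norm_le (b0 (y - z)) (b0 0)
      have a3 : K * ‖y - z‖ ≤ K * (‖y‖ + ‖z‖) :=
        mul_le_mul_of_nonneg_left (norm_sub_le y z) hK
      have a4 : ‖y‖ * ‖b0 (y - z)‖ ≤ ‖y‖ * (‖b0 0‖ + K * (‖y‖ + ‖z‖)) :=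
        mul_le_mul_of_nonneg_left (by linarith) (norm_nonneg y)
      have a5 := mul_nonneg hK (sq_nonneg (‖y‖ - ‖z‖))
      nlinarith
    rw [integral_add (integrable_const _) hi, integral_const_mul] at hle
    simpa using hle
  have h3 : 2 * (‖y‖ * B) ≤ (lam / 2 - K) * ‖y‖ ^ 2 + B ^ 2 / (lam / 2 - K) := by
    have := div_nonneg (sq_nonneg ((lam / 2 - K) * ‖y‖ - B)) hc.le
    have e : ((lam / 2 - K) * ‖y‖ - B) ^ 2 / (lam / 2 - K) =
      (lam / 2 - K) * ‖y‖ ^ 2 + B ^ 2 / (lam / 2 - K) - 2 * (‖y‖ * B) := by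
      have hne := hc.ne'
      generalize lam / 2 - K = c at hne
      field_simp
      ring
    linarith
  have h4 : ‖y‖ ^ 2 - 2 * δ * (⟪y, b1 y⟫ + ⟪y, J⟫) ≤
      ‖x‖ ^ 2 + sigma ^ 2 * ‖Δ‖ ^ 2 + 2 * sigma * ⟪Δ, x⟫ := by
    have e : y - δ • (b1 y + J) = x + sigma • Δ := by
      rw [sub_eq_iff_eq_add]
      refine hy.trans ?_
      abel
    have e1 := norm_sub_sq_real y (δ • (b1 y + J))
    have e2 := norm_add_sq_real x (sigma • Δ)
    rw [e] at e1
    rw [real_inner_smul_right, inner_add_right] at e1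
    rw [real_inner_smul_right, norm_smul, mul_pow, Real.norm_eq_abs, sq_abs,
      real_inner_comm] at e2
    have := sq_nonneg ‖δ • (b1 y + J)‖
    linarith
  have hB' : ‖y‖ * B = ‖y‖ * ‖b1 0‖ + ‖y‖ * ‖b0 0‖ := by rw [hB]; ring
  have h5 : 2 * (⟪y, b1 y⟫ + ⟪y, J⟫) ≤ -((3 * lam - 4 * K) / 2) * ‖y‖ ^ 2
      + K * (∫ z, ‖z‖ ^ 2 ∂μ)
      + 2 * (B ^ 2 / (lam / 2 - K) / 2 + (lam + lam0) * l0 ^ 2 + 1) := by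
    linarith
  have h6 := mul_le_mul_of_nonneg_left h5 hδ.le
  linarith
end

section
/- There exist constants δ* ∈ (0, 1] and C* > 0 such that for every δ ∈ (0, δ*], every x ∈ ℝ^d, and every Borel probability measure μ on ℝ^d with finite second moment, the tamed Euler drift step satisfies |x + δ·(b1^δ(x) + ∫_{ℝ^d} b0(x − y) μ(dy))|² ≤ (1 − (κ/4 + β_δ)·δ)·|x|² + β_δ·δ·∫_{ℝ^d} |y|² μ(dy) + C*·δ, where β_δ := K + ρ·√δ and ρ := 4K·(K + λ̂_{b1}). -/
open MeasureTheory
open scoped RealInnerProductSpace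

/-- Hilbert–Schmidt (Frobenius) norm of the Jacobian matrix of `b` at `x`. -/
noncomputable def jacobianHSNorm {d : ℕ}
    (b : EuclideanSpace ℝ (Fin d) → EuclideanSpace ℝ (Fin d))
    (x : EuclideanSpace ℝ (Fin d)) : ℝ :=
  Real.sqrt (∑ i : Fin d, ∑ j : Fin d,
    (fderiv ℝ b x (EuclideanSpace.single j (1 : ℝ)) i) ^ 2)


set_option maxHeartbeats 1000000 in
lemma aux_scalar (lam lh Ch C c0 α R K κ r P m M s : ℝ) (hlam : 0 < lam) (hlh : 0 < lh)
    (hCh : 0 < Ch) (hC : 0 < C) (hc0 : 0 ≤ c0) (hα : 0 < α) (hR : 0 < R) (hK : 0 ≤ K)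
    (hκ : κ = α * lam - 2 * K) (hκpos : 0 < κ)
    (hr : 0 ≤ r) (hP : 0 ≤ P) (hm : 0 ≤ m) (hmM : m ^ 2 ≤ M) (hs : 0 < s) (hs1 : s ≤ 1)
    (hsP : s * P ≤ 1) (hPl : R ≤ r → α ≤ P * (1 + s * α))
    (hs2 : s * lh ^ 2 ≤ 2 * lam)
    (hs3 : s * (lh ^ 2 * α + 2 * lam * α ^ 2
      + (lh + 3 * K * lh + 4 * K ^ 2 + 4 * K * (K + lh))) ≤ κ) :
    -2 * lam * P * r ^ 2 + 2 * C + 2 * r * (K * r + K * m + c0)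
      + s ^ 2 * (lh * r * P + Ch + (K * r + K * m + c0)) ^ 2 ≤
    -(κ / 4 + (K + 4 * K * (K + lh) * s)) * r ^ 2 + (K + 4 * K * (K + lh) * s) * M
      + (2 * C + 4 * c0 ^ 2 / κ + (lh + 4) * (Ch + c0) ^ 2
        + (4 * K + κ / 2 + (lh + 3 * K * lh + 4 * K ^ 2 + 4 * K * (K + lh))) * R ^ 2) := by
  obtain ⟨D, hD⟩ : ∃ D, D = Ch + c0 := ⟨_, rfl⟩
  have hD0 : 0 < D := by linarith
  obtain ⟨A, hA⟩ : ∃ A, A = lh + 3 * K * lh + 4 * K ^ 2 + 4 * K * (K + lh) := ⟨_, rfl⟩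
  have hA0 : 0 < A := by rw [hA]; positivity
  have hrm : 2 * (r * m) ≤ r ^ 2 + M := by nlinarith [sq_nonneg (r - m)]
  have h1 : 2 * r * (K * r + K * m + c0) ≤
      3 * K * r ^ 2 + K * M + κ / 4 * r ^ 2 + 4 * c0 ^ 2 / κ := by
    have e1 : K * (2 * (r * m)) ≤ K * (r ^ 2 + M) := mul_le_mul_of_nonneg_left hrm hK
    have e2 : 2 * r * c0 ≤ κ / 4 * r ^ 2 + 4 * c0 ^ 2 / κ := by
      have : κ / 4 * r ^ 2 + 4 * c0 ^ 2 / κ - 2 * r * c0 = (κ * r - 4 * c0) ^ 2 / (4 * κ) := by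
        field_simp
        ring
      have : 0 ≤ (κ * r - 4 * c0) ^ 2 / (4 * κ) := by positivity
      linarith
    linarith
  have h2 : s ^ 2 * (lh * r * P) ^ 2 ≤ s * lh ^ 2 * P * r ^ 2 := by
    have : (s * P) * (s * lh ^ 2 * P * r ^ 2) ≤ 1 * (s * lh ^ 2 * P * r ^ 2) :=
      mul_le_mul_of_nonneg_right hsP (by positivity)
    linarith
  have h3 : 2 * s ^ 2 * (lh * r * P) * (D + K * r + K * m) ≤
      s * (lh * (r ^ 2 + D ^ 2 + 3 * K * r ^ 2 + K * M)) := by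
    have e1 : (s * P) * (2 * s * lh * r * (D + K * r + K * m)) ≤
        1 * (2 * s * lh * r * (D + K * r + K * m)) :=
      mul_le_mul_of_nonneg_right hsP (by positivity)
    have e2 : 2 * r * (D + K * r + K * m) ≤ r ^ 2 + D ^ 2 + 3 * K * r ^ 2 + K * M := by
      have := mul_le_mul_of_nonneg_left hrm hK
      linarith [sq_nonneg (r - D)]
    have e3 := mul_le_mul_of_nonneg_left e2 (by positivity : 0 ≤ s * lh)
    linarith
  have h4 : s ^ 2 * (D + K * r + K * m) ^ 2 ≤
      s * (2 * K ^ 2 * M + 4 * D ^ 2 + 4 * K ^ 2 * r ^ 2) := by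
    have e0 : s ^ 2 ≤ s := by
      have := mul_le_mul_of_nonneg_right hs1 hs.le
      linarith
    have e1 : (D + K * r + K * m) ^ 2 ≤ 2 * K ^ 2 * M + 4 * D ^ 2 + 4 * K ^ 2 * r ^ 2 := by
      have := mul_le_mul_of_nonneg_left hmM (by positivity : 0 ≤ K ^ 2)
      linarith [sq_nonneg (D - K * r), sq_nonneg (D + K * r - K * m)]
    exact mul_le_mul e0 e1 (by positivity) hs.le
  have hM0 : 0 ≤ M := le_trans (sq_nonneg m) hmM
  have hM : s * (lh * K + 2 * K ^ 2) * M ≤ 4 * K * (K + lh) * s * M := by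
    have : 0 ≤ s * (3 * (lh * K) + 2 * K ^ 2) * M := by positivity
    linarith
  have hDD : s * ((lh + 4) * D ^ 2) ≤ (lh + 4) * D ^ 2 := by
    have : s * ((lh + 4) * D ^ 2) ≤ 1 * ((lh + 4) * D ^ 2) :=
      mul_le_mul_of_nonneg_right hs1 (by positivity)
    linarith
  have hkey : (4 * K + κ / 2 + s * A) * r ^ 2 ≤
      (2 * lam - s * lh ^ 2) * P * r ^ 2 + (4 * K + κ / 2 + A) * R ^ 2 := by
    rcases le_or_gt R r with h | h
    · have hp := hPl h
      have hq : α * (1 - s * α) ≤ P := by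
        have f1 : α * (1 - s * α) * (1 + s * α) ≤ P * (1 + s * α) := by
          have : 0 ≤ α * (s * α) ^ 2 := by positivity
          linarith
        exact le_of_mul_le_mul_right f1 (by positivity)
      have hw : (2 * lam - s * lh ^ 2) * (α * (1 - s * α)) ≤ (2 * lam - s * lh ^ 2) * P :=
        mul_le_mul_of_nonneg_left hq (by linarith)
      have hz : 4 * K + κ / 2 + s * A ≤ (2 * lam - s * lh ^ 2) * P := by
        have : 0 ≤ s * lh ^ 2 * (α * (s * α)) := by positivity
        rw [← hA] at hs3
        linarith
      have := mul_le_mul_of_nonneg_right hz (sq_nonneg r)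
      have : 0 ≤ (4 * K + κ / 2 + A) * R ^ 2 := by positivity
      linarith
    · have e0 : r ^ 2 ≤ R ^ 2 := pow_le_pow_left₀ hr h.le 2
      have e1 : 4 * K + κ / 2 + s * A ≤ 4 * K + κ / 2 + A := by
        have := mul_le_mul_of_nonneg_right hs1 hA0.le
        linarith
      have e2 : (4 * K + κ / 2 + s * A) * r ^ 2 ≤ (4 * K + κ / 2 + A) * R ^ 2 :=
        mul_le_mul e1 e0 (by positivity) (by positivity)
      have : 0 ≤ (2 * lam - s * lh ^ 2) * P * r ^ 2 := by
        have : 0 ≤ 2 * lam - s * lh ^ 2 := by linarith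
        positivity
      linarith
  have hexp : s ^ 2 * (lh * r * P + Ch + (K * r + K * m + c0)) ^ 2 =
      s ^ 2 * (lh * r * P) ^ 2 + 2 * s ^ 2 * (lh * r * P) * (D + K * r + K * m)
      + s ^ 2 * (D + K * r + K * m) ^ 2 := by
    rw [hD]; ring
  rw [hexp, ← hD, ← hA]
  have hAr : s * A * r ^ 2 = s * (lh + 3 * K * lh + 4 * K ^ 2 + 4 * K * (K + lh)) * r ^ 2 := by
    rw [hA]
  linarith

/- One-step dissipativity of the tamed Euler drift step (Lemma 4.2): there are
   δ* ∈ (0,1] and C* > 0 such that for all δ ∈ (0, δ*], x, and probability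
   measures μ with finite second moment,
   |x + δ·(b1^δ(x) + (b0 ∗ μ)(x))|² ≤ (1 − (κ/4 + β_δ)δ)|x|² + β_δ·δ·μ(|·|²) + C*·δ,
   where b1^δ(x) = b1(x)/(1 + √δ·‖∇b1(x)‖_HS), β_δ = K + ρ√δ, ρ = 4K(K + λ̂_{b1}). -/
theorem stmt_11 (d : ℕ) (hd : 1 ≤ d)
    (b1 b0 : EuclideanSpace ℝ (Fin d) → EuclideanSpace ℝ (Fin d))
    (hb1C1 : ContDiff ℝ 1 b1) (hb0m : Measurable b0)
    (lamb1 Cb1 lamhatb1 Chatb1 α Rα K κ ρ : ℝ)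
    (hlamb1 : 0 < lamb1) (hCb1 : 0 < Cb1) (hlamhatb1 : 0 < lamhatb1)
    (hChatb1 : 0 < Chatb1) (hα : 0 < α) (hRα : 0 < Rα) (hK : 0 ≤ K)
    (hdiss : ∀ x : EuclideanSpace ℝ (Fin d),
      ⟪x, b1 x⟫ ≤ -lamb1 * ‖x‖ ^ 2 * jacobianHSNorm b1 x + Cb1)
    (hgrowth : ∀ x : EuclideanSpace ℝ (Fin d),
      ‖b1 x‖ ≤ lamhatb1 * ‖x‖ * jacobianHSNorm b1 x + Chatb1)
    (hlower : ∀ x : EuclideanSpace ℝ (Fin d), Rα ≤ ‖x‖ → α ≤ jacobianHSNorm b1 x)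
    (hB2 : ∀ x y : EuclideanSpace ℝ (Fin d), ‖b0 x - b0 y‖ ≤ K * ‖x - y‖)
    (hκ : κ = α * lamb1 - 2 * K) (hκpos : 0 < κ)
    (hρ : ρ = 4 * K * (K + lamhatb1)) :
    ∃ δstar Cstar : ℝ, 0 < δstar ∧ δstar ≤ 1 ∧ 0 < Cstar ∧
      ∀ δ : ℝ, 0 < δ → δ ≤ δstar →
      ∀ (x : EuclideanSpace ℝ (Fin d)) (μ : Measure (EuclideanSpace ℝ (Fin d))),
        IsProbabilityMeasure μ → Integrable (fun y => ‖y‖ ^ 2) μ →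
        ‖x + δ • ((1 + Real.sqrt δ * jacobianHSNorm b1 x)⁻¹ • b1 x
            + ∫ y, b0 (x - y) ∂μ)‖ ^ 2 ≤
          (1 - (κ / 4 + (K + ρ * Real.sqrt δ)) * δ) * ‖x‖ ^ 2
            + (K + ρ * Real.sqrt δ) * δ * (∫ y, ‖y‖ ^ 2 ∂μ) + Cstar * δ := by
  classical
  obtain ⟨Q, hQ⟩ : ∃ Q, Q = lamhatb1 ^ 2 * α + 2 * lamb1 * α ^ 2
      + (lamhatb1 + 3 * K * lamhatb1 + 4 * K ^ 2 + 4 * K * (K + lamhatb1)) := ⟨_, rfl⟩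
  have hQ0 : 0 < Q := by rw [hQ]; positivity
  obtain ⟨s0, hs0⟩ : ∃ s0, s0 = min 1 (min (κ / Q) (2 * lamb1 / lamhatb1 ^ 2)) := ⟨_, rfl⟩
  have hs0pos : 0 < s0 := by
    rw [hs0]
    exact lt_min one_pos (lt_min (by positivity) (by positivity))
  have hs01 : s0 ≤ 1 := by rw [hs0]; exact min_le_left _ _
  have hs02 : s0 ≤ κ / Q := by
    rw [hs0]; exact (min_le_right _ _).trans (min_le_left _ _)
  have hs03 : s0 ≤ 2 * lamb1 / lamhatb1 ^ 2 := by
    rw [hs0]; exact (min_le_right _ _).trans (min_le_right _ _)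
  refine ⟨s0 ^ 2, 2 * Cb1 + 4 * ‖b0 0‖ ^ 2 / κ + (lamhatb1 + 4) * (Chatb1 + ‖b0 0‖) ^ 2
        + (4 * K + κ / 2 + (lamhatb1 + 3 * K * lamhatb1 + 4 * K ^ 2
          + 4 * K * (K + lamhatb1))) * Rα ^ 2, by positivity, by nlinarith, by positivity, ?_⟩
  intro δ hδ hδs x μ hμ hsqInt
  obtain ⟨s, hs⟩ : ∃ s, s = Real.sqrt δ := ⟨_, rfl⟩
  rw [← hs]
  have hspos : 0 < s := by rw [hs]; exact Real.sqrt_pos.2 hδ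
  have hss : δ = s ^ 2 := by rw [hs]; exact (Real.sq_sqrt hδ.le).symm
  have hsle : s ≤ s0 := by
    rw [hs]; exact Real.sqrt_le_iff.2 ⟨hs0pos.le, hδs⟩
  have hs1 : s ≤ 1 := hsle.trans hs01
  have hs3 := (le_div_iff₀ hQ0).1 (hsle.trans hs02)
  have hs2 := (le_div_iff₀ (by positivity)).1 (hsle.trans hs03)
  have hg0 : 0 ≤ jacobianHSNorm b1 x := Real.sqrt_nonneg _
  have hd1 := hdiss x
  have hgr := hgrowth x
  have hlo := hlower x
  generalize jacobianHSNorm b1 x = g at *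
  have hI1 : Integrable (fun y : EuclideanSpace ℝ (Fin d) => ‖y‖) μ := by
    refine Integrable.mono' (hsqInt.add (integrable_const (1 : ℝ)))
      (continuous_norm.aestronglyMeasurable) (Filter.Eventually.of_forall fun y => ?_)
    simp only [norm_norm, Pi.add_apply]
    nlinarith [sq_nonneg (‖y‖ - 1), norm_nonneg y]
  obtain ⟨m, hm⟩ : ∃ m, m = ∫ y, ‖y‖ ∂μ := ⟨_, rfl⟩
  obtain ⟨M, hM⟩ : ∃ M, M = ∫ y, ‖y‖ ^ 2 ∂μ := ⟨_, rfl⟩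
  have hm0 : 0 ≤ m := by rw [hm]; exact integral_nonneg fun y => norm_nonneg y
  have hmM : m ^ 2 ≤ M := by
    have e : 0 ≤ ∫ y, (‖y‖ ^ 2 - (2 * m) * ‖y‖ + m ^ 2) ∂μ :=
      integral_nonneg fun y => by
        show 0 ≤ ‖y‖ ^ 2 - (2 * m) * ‖y‖ + m ^ 2
        nlinarith [sq_nonneg (‖y‖ - m)]
    have hsub : Integrable (fun y : EuclideanSpace ℝ (Fin d) => ‖y‖ ^ 2 - (2 * m) * ‖y‖) μ :=
      hsqInt.sub (hI1.const_mul _)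
    rw [integral_add hsub (integrable_const _), integral_sub hsqInt (hI1.const_mul _), integral_const_mul, ← hm, ← hM] at e
    simp at e
    nlinarith
  rw [← hM]
  have hB : ‖∫ y, b0 (x - y) ∂μ‖ ≤ K * ‖x‖ + K * m + ‖b0 0‖ := by
    have e : ‖∫ y, b0 (x - y) ∂μ‖ ≤ ∫ y, (K * ‖y‖ + (K * ‖x‖ + ‖b0 0‖)) ∂μ := by
      refine norm_integral_le_of_norm_le ((hI1.const_mul _).add (integrable_const _))
        (Filter.Eventually.of_forall fun y => ?_)
      have e1 := hB2 (x - y) 0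
      rw [sub_zero] at e1
      have e2 : ‖b0 (x - y)‖ ≤ ‖b0 (x - y) - b0 0‖ + ‖b0 0‖ := by
        simpa using norm_add_le (b0 (x - y) - b0 0) (b0 0)
      have e3 := mul_le_mul_of_nonneg_left (norm_sub_le x y) hK
      linarith
    rw [integral_add (hI1.const_mul _) (integrable_const _), integral_const_mul, ← hm] at e
    simp at e
    linarith
  generalize (∫ y, b0 (x - y) ∂μ) = B at *
  have ht : 0 < 1 + s * g := by positivity
  obtain ⟨T, hT⟩ : ∃ T, T = (1 + s * g)⁻¹ := ⟨_, rfl⟩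
  have hT0 : 0 < T := by rw [hT]; positivity
  have hTm : T * (1 + s * g) = 1 := by rw [hT]; exact inv_mul_cancel₀ ht.ne'
  have hsg : 0 ≤ T * (s * g) := by positivity
  have hT1 : T ≤ 1 := by linarith
  rw [← hT]
  have hPl : Rα ≤ ‖x‖ → α ≤ g * T * (1 + s * α) := by
    intro h
    have h1 := hlo h
    have h2 := mul_le_mul_of_nonneg_left h1 hT0.le
    have h3 : α = T * α + T * (s * g) * α := by
      have : α = T * (1 + s * g) * α := by rw [hTm, one_mul]
      linarith
    linarith
  have key := aux_scalar lamb1 lamhatb1 Chatb1 Cb1 ‖b0 0‖ α Rα K κ ‖x‖ (g * T) m M s hlamb1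
    hlamhatb1 hChatb1 hCb1 (norm_nonneg _) hα hRα hK hκ hκpos (norm_nonneg _) (by positivity)
    hm0 hmM hspos hs1 (by linarith) hPl hs2 (by rw [← hQ]; exact hs3)
  have hin : ⟪x, T • b1 x + B⟫ ≤ -lamb1 * (g * T) * ‖x‖ ^ 2 + Cb1
      + ‖x‖ * (K * ‖x‖ + K * m + ‖b0 0‖) := by
    rw [inner_add_right, inner_smul_right]
    have e1 := mul_le_mul_of_nonneg_left hd1 hT0.le
    have e2 := real_inner_le_norm x B
    have e3 := mul_le_mul_of_nonneg_left hB (norm_nonneg x)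
    have e4 : T * Cb1 ≤ 1 * Cb1 := mul_le_mul_of_nonneg_right hT1 hCb1.le
    linarith
  have hno : ‖T • b1 x + B‖ ≤ lamhatb1 * ‖x‖ * (g * T) + Chatb1
      + (K * ‖x‖ + K * m + ‖b0 0‖) := by
    have e0 := norm_add_le (T • b1 x) B
    rw [norm_smul, Real.norm_of_nonneg hT0.le] at e0
    have e1 := mul_le_mul_of_nonneg_left hgr hT0.le
    have e4 : T * Chatb1 ≤ 1 * Chatb1 := mul_le_mul_of_nonneg_right hT1 hChatb1.le
    linarith
  have hno2 := pow_le_pow_left₀ (norm_nonneg _) hno 2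
  rw [norm_add_sq_real, inner_smul_right, norm_smul, Real.norm_of_nonneg hδ.le, mul_pow]
  have f1 := mul_le_mul_of_nonneg_left hin hδ.le
  have f2 := mul_le_mul_of_nonneg_left hno2 (sq_nonneg δ)
  have f3 := mul_le_mul_of_nonneg_left key hδ.le
  rw [← hss] at f3
  rw [hρ]
  linarith
end

section
/- Let ℓ ≥ 3 be an odd integer and define b1 : ℝ → ℝ by b1(x) := x − x^ℓ. Then there exist constants λ, C, λ̂, Ĉ, α, R > 0 such that for all x ∈ ℝ: x·b1(x) ≤ −λ·x²·|b1′(x)| + C, |b1(x)| ≤ λ̂·|x|·|b1′(x)| + Ĉ, and |b1′(x)| ≥ α whenever |x| ≥ R, where b1′(x) = 1 − ℓ·x^{ℓ−1}. -/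
/- For b1(x) = x − x^ℓ with ℓ ≥ 3 odd, the structural conditions (A1′) hold:
   gradient-weighted dissipativity, gradient-weighted growth, and a uniform lower
   bound on |b1′(x)| = |1 − ℓx^{ℓ−1}| outside a compact set. -/
theorem stmt_16 (ℓ : ℕ) (hodd : Odd ℓ) (hℓ : 3 ≤ ℓ) :
    ∃ lam C lamhat Chat α R : ℝ,
      0 < lam ∧ 0 < C ∧ 0 < lamhat ∧ 0 < Chat ∧ 0 < α ∧ 0 < R ∧
      ∀ x : ℝ,
        x * (x - x ^ ℓ) ≤ -lam * x ^ 2 * |1 - (ℓ : ℝ) * x ^ (ℓ - 1)| + C ∧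
        |x - x ^ ℓ| ≤ lamhat * |x| * |1 - (ℓ : ℝ) * x ^ (ℓ - 1)| + Chat ∧
        (R ≤ |x| → α ≤ |1 - (ℓ : ℝ) * x ^ (ℓ - 1)|) := by
  obtain ⟨k, rfl⟩ := hodd
  have hk : k ≠ 0 := by omega
  have hL : (3 : ℝ) ≤ ((2 * k + 1 : ℕ) : ℝ) := by exact_mod_cast hℓ
  generalize hLd : ((2 * k + 1 : ℕ) : ℝ) = L at hL ⊢
  have hLpos : 0 < L := by linarith
  refine ⟨1 / (2 * L), 8, 1, 1, 1, 1, by positivity, by norm_num, by norm_num, by norm_num,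
    by norm_num, by norm_num, ?_⟩
  intro x
  have e1 : x ^ (2 * k + 1 - 1) = (x ^ 2) ^ k := by
    rw [Nat.add_sub_cancel, pow_mul]
  have e2 : x ^ (2 * k + 1) = (x ^ 2) ^ k * x := by
    rw [pow_succ, pow_mul]
  rw [e1, e2]
  have hx2 : 0 ≤ x ^ 2 := sq_nonneg x
  have hp0 : 0 ≤ (x ^ 2) ^ k := pow_nonneg hx2 k
  have hbig : 1 ≤ x ^ 2 → x ^ 2 ≤ (x ^ 2) ^ k := fun h => le_self_pow₀ h hk
  have hsmall : x ^ 2 ≤ 1 → (x ^ 2) ^ k ≤ 1 := fun h => pow_le_one₀ hx2 h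
  generalize (x ^ 2) ^ k = p at hp0 hbig hsmall ⊢
  have hLp : 3 * p ≤ L * p := mul_le_mul_of_nonneg_right hL hp0
  have habs : |x| ^ 2 = x ^ 2 := sq_abs x
  have hax : 0 ≤ |x| := abs_nonneg x
  have hone : 1 ≤ |x| → 1 ≤ p := fun h => by
    have h1 : 1 ≤ x ^ 2 := by nlinarith
    exact h1.trans (hbig h1)
  refine ⟨?_, ?_, ?_⟩
  · have hA : |1 - L * p| ≤ 1 + L * p := by
      rw [abs_le]; constructor <;> nlinarith
    have hB : 1 / (2 * L) * |1 - L * p| ≤ 1 + p / 2 := by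
      have h1 : 1 / (2 * L) * |1 - L * p| ≤ 1 / (2 * L) * (1 + L * p) :=
        mul_le_mul_of_nonneg_left hA (by positivity)
      have h2 : 1 / (2 * L) * (1 + L * p) = 1 / (2 * L) + p / 2 := by
        field_simp
      have h3 : 1 / (2 * L) ≤ 1 := by
        rw [div_le_one (by positivity)]; linarith
      linarith
    have hC := mul_le_mul_of_nonneg_left hB hx2
    have hD : x ^ 2 * (2 - p / 2) ≤ 8 := by
      rcases le_total 4 (x ^ 2) with h | h
      · have := hbig (by linarith)
        nlinarith
      · nlinarith [mul_nonneg hx2 hp0]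
    nlinarith
  · have e3 : |x - p * x| = |x| * |1 - p| := by
      rw [← abs_mul]; congr 1; ring
    rw [e3]
    rcases le_total 1 |x| with h | h
    · have hp := hone h
      have h1 : |1 - p| ≤ |1 - L * p| := by
        rw [abs_of_nonpos (by linarith), abs_of_nonpos (by linarith)]; linarith
      have := mul_le_mul_of_nonneg_left h1 hax
      linarith
    · have hp : p ≤ 1 := hsmall (by nlinarith)
      have h1 : |1 - p| ≤ 1 := by rw [abs_le]; constructor <;> linarith
      have h2 := mul_le_one₀ h (abs_nonneg (1 - p)) h1
      have h3 : 0 ≤ 1 * |x| * |1 - L * p| := by positivity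
      linarith
  · intro h
    have hp := hone h
    rw [abs_of_nonpos (by linarith)]; linarith
end
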